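/- arXiv:1406.6665 — 3 statements merged into one kernel-verified Lean document; each statement's English description precedes it below -/
import Mathlib

section
/- Let a ≥ 1, s ≥ 0 be integers, let h^1, …, h^n ∈ Mat(N, ℂ) satisfy the Clifford relations for signature (p, q), let U ∈ Mat(N, ℂ), and fix ν ∈ {1,…,n} with h_ν = η_{νν} h^ν. Then F^s(F^a(U)·h_ν) = −F^{s+1}(F^{a−1}(U)·h_ν) + 2 F^s(h_ν·F^{a−1}(U)), and F^s(h_ν·F^a(U)) = −F^{s+1}(h_ν·F^{a−1}(U)) + 2 F^s(F^{a−1}(U)·h_ν). -/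
open Matrix

/-- The diagonal metric entries η^{μμ} of signature (p,q). -/
def etaC (p q : ℕ) (μ : Fin (p + q)) : ℂ := if (μ : ℕ) < p then 1 else -1

/-- The Clifford relations h^μ h^ν + h^ν h^μ = 2 η^{μν} I for signature (p,q). -/
def CliffRel (p q N : ℕ) (h : Fin (p + q) → Matrix (Fin N) (Fin N) ℂ) : Prop :=
  ∀ μ ν : Fin (p + q), h μ * h ν + h ν * h μ =
    (2 * if μ = ν then etaC p q μ else 0) • (1 : Matrix (Fin N) (Fin N) ℂ)

/-- The generator contraction F(U) = Σ_a η^{aa} h^a U h^a. -/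
noncomputable def gencon (p q N : ℕ) (h : Fin (p + q) → Matrix (Fin N) (Fin N) ℂ)
    (U : Matrix (Fin N) (Fin N) ℂ) : Matrix (Fin N) (Fin N) ℂ :=
  ∑ a : Fin (p + q), etaC p q a • (h a * U * h a)

/-!
For `x` in the span of the generators, anticommuting `x` past the right factor of each summand
`h a * V * h a` turns `F V * x` into `-F (V * x)` plus terms in which the anticommutator of `h a`
with `x` has become a scalar. Since the weights of the contraction invert the metric, these scalars
reassemble `2 x` on the other side of `V`, so `F V * x = -F (V * x) + 2 x V`. The left-handed
identity is the mirror image, and linearity of `F` carries both through the outer iterates.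
-/

section Contraction

variable {R A ι : Type*} [CommRing R] [Ring A] [Algebra R A]

/-- The Clifford relations `h μ * h ν + h ν * h μ = 2 η^{μν}` in an arbitrary algebra, for the
diagonal metric with entries `η`, which may be degenerate. -/
def IsCliffordFamily [DecidableEq ι] (η : ι → R) (h : ι → A) : Prop :=
  ∀ μ ν, h μ * h ν + h ν * h μ = (2 * if μ = ν then η μ else 0) • (1 : A)

variable [Fintype ι]

/-- The contraction `U ↦ ∑ a, w a • (h a * U * h a)` of the family `h` with weights `w`, as a linear
map. The weights are independent of any metric; the generator contraction of a Clifford family takes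
for `w` the entries of the inverse metric. -/
def generatorContraction (w : ι → R) (h : ι → A) : A →ₗ[R] A :=
  ∑ a, w a • LinearMap.mulLeftRight R (h a, h a)

theorem generatorContraction_apply (w : ι → R) (h : ι → A) (U : A) :
    generatorContraction w h U = ∑ a, w a • (h a * U * h a) := by
  simp [generatorContraction]

theorem generatorContraction_mul_add_apply_mul (w : ι → R) (h : ι → A) (V x : A) :
    generatorContraction w h V * x + generatorContraction w h (V * x) =
      ∑ a, w a • (h a * V * (h a * x + x * h a)) := by
  simp only [generatorContraction_apply, Finset.sum_mul, smul_mul_assoc, ← Finset.sum_add_distrib,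
    ← smul_add, mul_add, mul_assoc]

theorem mul_generatorContraction_add_apply_mul (w : ι → R) (h : ι → A) (V x : A) :
    x * generatorContraction w h V + generatorContraction w h (x * V) =
      ∑ a, w a • ((x * h a + h a * x) * V * h a) := by
  simp only [generatorContraction_apply, Finset.mul_sum, mul_smul_comm, ← Finset.sum_add_distrib,
    ← smul_add, add_mul, mul_assoc]

namespace IsCliffordFamily

variable [DecidableEq ι] {η w : ι → R} {h : ι → A}

theorem generatorContraction_mul_generator (hcl : IsCliffordFamily η h)
    (hw : ∀ a, w a * η a = 1) (V : A) (ν : ι) :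
    generatorContraction w h V * h ν =
      -generatorContraction w h (V * h ν) + (2 : R) • (h ν * V) := by
  rw [eq_neg_add_iff_add_eq, add_comm, generatorContraction_mul_add_apply_mul]
  calc ∑ a, w a • (h a * V * (h a * h ν + h ν * h a))
      = ∑ a, if a = ν then ((2 : R) * (w a * η a)) • (h a * V) else 0 := by
        refine Finset.sum_congr rfl fun a _ => ?_
        rw [hcl a ν]
        split_ifs <;> simp [smul_smul, mul_left_comm]
    _ = (2 : R) • (h ν * V) := by simp [hw]

theorem generator_mul_generatorContraction (hcl : IsCliffordFamily η h)
    (hw : ∀ a, w a * η a = 1) (V : A) (ν : ι) :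
    h ν * generatorContraction w h V =
      -generatorContraction w h (h ν * V) + (2 : R) • (V * h ν) := by
  rw [eq_neg_add_iff_add_eq, add_comm, mul_generatorContraction_add_apply_mul]
  calc ∑ a, w a • ((h ν * h a + h a * h ν) * V * h a)
      = ∑ a, if a = ν then ((2 : R) * (w a * η a)) • (V * h a) else 0 := by
        refine Finset.sum_congr rfl fun a _ => ?_
        rw [add_comm (h ν * h a), hcl a ν]
        split_ifs <;> simp [smul_smul, mul_left_comm]
    _ = (2 : R) • (V * h ν) := by simp [hw]

theorem generatorContraction_mul_of_mem_span (hcl : IsCliffordFamily η h)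
    (hw : ∀ a, w a * η a = 1) (V : A) {x : A} (hx : x ∈ Submodule.span R (Set.range h)) :
    generatorContraction w h V * x = -generatorContraction w h (V * x) + (2 : R) • (x * V) := by
  induction hx using Submodule.span_induction with
  | mem x hx =>
    obtain ⟨ν, rfl⟩ := hx
    exact hcl.generatorContraction_mul_generator hw V ν
  | zero => simp
  | add x y _ _ hx hy =>
    rw [mul_add, hx, hy, mul_add, map_add, add_mul]
    module
  | smul r x _ hx =>
    rw [mul_smul_comm, hx, mul_smul_comm, map_smul, smul_mul_assoc]
    module

theorem mul_generatorContraction_of_mem_span (hcl : IsCliffordFamily η h)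
    (hw : ∀ a, w a * η a = 1) (V : A) {x : A} (hx : x ∈ Submodule.span R (Set.range h)) :
    x * generatorContraction w h V = -generatorContraction w h (x * V) + (2 : R) • (V * x) := by
  induction hx using Submodule.span_induction with
  | mem x hx =>
    obtain ⟨ν, rfl⟩ := hx
    exact hcl.generator_mul_generatorContraction hw V ν
  | zero => simp
  | add x y _ _ hx hy =>
    rw [add_mul, hx, hy, add_mul, map_add, mul_add]
    module
  | smul r x _ hx =>
    rw [smul_mul_assoc, hx, smul_mul_assoc, map_smul, mul_smul_comm]
    module

end IsCliffordFamily

theorem contraction_recursion_general [DecidableEq ι] {η w : ι → R} {h : ι → A}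
    (hcl : IsCliffordFamily η h) (hw : ∀ a, w a * η a = 1) {x : A}
    (hx : x ∈ Submodule.span R (Set.range h)) (U : A) (k s : ℕ) :
    (generatorContraction w h)^[s] ((generatorContraction w h)^[k + 1] U * x) =
      -((generatorContraction w h)^[s + 1] ((generatorContraction w h)^[k] U * x))
        + (2 : R) • (generatorContraction w h)^[s] (x * (generatorContraction w h)^[k] U)
    ∧
    (generatorContraction w h)^[s] (x * (generatorContraction w h)^[k + 1] U) =
      -((generatorContraction w h)^[s + 1] (x * (generatorContraction w h)^[k] U))
        + (2 : R) • (generatorContraction w h)^[s] ((generatorContraction w h)^[k] U * x) := by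
  simp only [Function.iterate_succ_apply' _ k, Function.iterate_succ_apply _ s,
    hcl.generatorContraction_mul_of_mem_span hw _ hx,
    hcl.mul_generatorContraction_of_mem_span hw _ hx, ← Module.End.pow_apply, map_add, map_neg,
    map_smul, and_self]

end Contraction

theorem etaC_mul_self (p q : ℕ) (μ : Fin (p + q)) : etaC p q μ * etaC p q μ = 1 := by
  unfold etaC
  split_ifs <;> norm_num

theorem gencon_eq_generatorContraction (p q N : ℕ)
    (h : Fin (p + q) → Matrix (Fin N) (Fin N) ℂ) :
    gencon p q N h = generatorContraction (etaC p q) h :=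
  funext fun U => (generatorContraction_apply (etaC p q) h U).symm

/-- with h_ν = η_{νν} h^ν, for a ≥ 1 and s ≥ 0 one has
F^s(F^a(U)·h_ν) = −F^{s+1}(F^{a−1}(U)·h_ν) + 2 F^s(h_ν·F^{a−1}(U)) and
F^s(h_ν·F^a(U)) = −F^{s+1}(h_ν·F^{a−1}(U)) + 2 F^s(F^{a−1}(U)·h_ν). -/
theorem contraction_recursion
    (p q N : ℕ) (hN : 1 ≤ N)
    (h : Fin (p + q) → Matrix (Fin N) (Fin N) ℂ)
    (hcl : CliffRel p q N h)
    (U : Matrix (Fin N) (Fin N) ℂ) (ν : Fin (p + q))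
    (a s : ℕ) (ha : 1 ≤ a) :
    (gencon p q N h)^[s] ((gencon p q N h)^[a] U * (etaC p q ν • h ν)) =
      -((gencon p q N h)^[s + 1] ((gencon p q N h)^[a - 1] U * (etaC p q ν • h ν)))
        + (2 : ℂ) • (gencon p q N h)^[s] ((etaC p q ν • h ν) * (gencon p q N h)^[a - 1] U)
    ∧
    (gencon p q N h)^[s] ((etaC p q ν • h ν) * (gencon p q N h)^[a] U) =
      -((gencon p q N h)^[s + 1] ((etaC p q ν • h ν) * (gencon p q N h)^[a - 1] U))
        + (2 : ℂ) • (gencon p q N h)^[s] ((gencon p q N h)^[a - 1] U * (etaC p q ν • h ν)) := by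
  obtain ⟨k, rfl⟩ := Nat.exists_eq_add_of_le' ha
  rw [Nat.add_sub_cancel, gencon_eq_generatorContraction]
  exact contraction_recursion_general hcl (etaC_mul_self p q)
    (Submodule.smul_mem _ _ (Submodule.subset_span ⟨ν, rfl⟩)) U k s
end

section
/- Let h^μ : ℝⁿ → Mat(N, ℂ) (μ = 1,…,n) be twice continuously differentiable and satisfy the Clifford relations at every point, and let C_μ : ℝⁿ → Mat(N, ℂ) (μ = 1,…,n) be continuously differentiable with tr C_μ(x) = 0 for all μ, x. Assume the primitive field equation ∂_μ h^ν − [C_μ, h^ν] = 0 holds for all μ, ν, and assume that for every x ∈ ℝⁿ the only matrices commuting with h^ν(x) for all ν = 1,…,n are the scalar multiples of the identity. Then ∂_μ C_ν − ∂_ν C_μ − [C_μ, C_ν] = 0 for all μ, ν = 1, …, n. -/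
open Matrix

attribute [local instance] Matrix.normedAddCommGroup Matrix.normedSpace

/-- The partial derivative ∂_μ of a matrix-valued function on ℝⁿ. -/
noncomputable def pder {n N : ℕ} (μ : Fin n)
    (f : (Fin n → ℝ) → Matrix (Fin N) (Fin N) ℂ) (x : Fin n → ℝ) :
    Matrix (Fin N) (Fin N) ℂ :=
  fderiv ℝ f x (Pi.single μ 1)

/-! Write `D_u` for the derivative along `u`. Differentiating `D_v h = ⁅B, h⁆` along `u` and
`D_u h = ⁅A, h⁆` along `v` gives two expressions for the same second derivative of `h`; by the
Jacobi identity their difference is `⁅F, h⁆`, where `F = D_u B - D_v A - ⁅A, B⁆`. So `F` commutes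
with every `h`, hence is scalar; it is also traceless, because a commutator is, and in
characteristic zero a traceless scalar matrix vanishes. -/

open scoped Topology

theorem sub_sub_lie_lie {A : Type*} [NonUnitalRing A] (a b c d m : A) :
    ⁅c - d - ⁅a, b⁆, m⁆ = (⁅c, m⁆ + ⁅b, ⁅a, m⁆⁆) - (⁅d, m⁆ + ⁅a, ⁅b, m⁆⁆) := by
  simp only [Ring.lie_def, mul_sub, sub_mul, mul_assoc]
  abel

theorem smul_one_eq_zero_of_trace_eq_zero {n R : Type*} [Fintype n] [DecidableEq n] [Semiring R]
    [IsAddTorsionFree R] {c : R} (hc : trace (c • (1 : Matrix n n R)) = 0) :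
    c • (1 : Matrix n n R) = 0 := by
  cases isEmpty_or_nonempty n
  · exact Subsingleton.elim _ _
  · have hc' : Fintype.card n • c = 0 := by
      rwa [trace_smul, trace_one, smul_eq_mul, (Nat.cast_commute _ c).symm.eq,
        ← nsmul_eq_mul] at hc
    rw [(smul_eq_zero.mp hc').resolve_left Fintype.card_ne_zero, zero_smul]

section MatrixCalculus

variable {𝕜 E R l m n : Type*} [NontriviallyNormedField 𝕜] [NormedAddCommGroup E]
  [NormedSpace 𝕜 E] {x : E}

section Entries

variable [NormedAddCommGroup R] [NormedSpace 𝕜 R] [Finite n]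

theorem differentiableAt_matrix {f : E → Matrix m n R} :
    DifferentiableAt 𝕜 f x ↔ ∀ i j, DifferentiableAt 𝕜 (fun y => f y i j) x := by
  have := Fintype.ofFinite n
  exact differentiableAt_pi.trans (forall_congr' fun _ => differentiableAt_pi)

theorem fderiv_matrix_apply {f : E → Matrix m n R} (hf : DifferentiableAt 𝕜 f x) (u : E) (i : m)
    (j : n) :
    fderiv 𝕜 f x u i j = fderiv 𝕜 (fun y => f y i j) x u := by
  have := Fintype.ofFinite n
  have hij := hasFDerivAt_pi'.mp (hasFDerivAt_pi'.mp hf.hasFDerivAt i) j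
  rw [hij.fderiv]
  rfl

theorem trace_fderiv [Fintype m] {f : E → Matrix m m R} (hf : DifferentiableAt 𝕜 f x) (u : E) :
    trace (fderiv 𝕜 f x u) = fderiv 𝕜 (fun y => trace (f y)) x u := by
  simp only [trace, diag_apply, fderiv_matrix_apply hf]
  rw [fderiv_fun_sum fun i _ => differentiableAt_matrix.mp hf i i, _root_.sum_apply]

end Entries

variable [NormedRing R] [NormedAlgebra 𝕜 R] [Fintype m] [Finite n]

theorem differentiableAt_matrix_mul {f : E → Matrix l m R} {g : E → Matrix m n R}
    (hf : DifferentiableAt 𝕜 f x) (hg : DifferentiableAt 𝕜 g x) :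
    DifferentiableAt 𝕜 (fun y => f y * g y) x := by
  rw [differentiableAt_matrix] at *
  exact fun i j => DifferentiableAt.fun_sum fun k _ => (hf i k).fun_mul (hg k j)

theorem fderiv_matrix_mul {f : E → Matrix l m R} {g : E → Matrix m n R}
    (hf : DifferentiableAt 𝕜 f x) (hg : DifferentiableAt 𝕜 g x) (u : E) :
    fderiv 𝕜 (fun y => f y * g y) x u = fderiv 𝕜 f x u * g x + f x * fderiv 𝕜 g x u := by
  have hfg := differentiableAt_matrix_mul hf hg
  rw [differentiableAt_matrix] at *
  ext i j
  calc fderiv 𝕜 (fun y => f y * g y) x u i j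
      = fderiv 𝕜 (fun y => ∑ k, f y i k * g y k j) x u :=
        fderiv_matrix_apply (differentiableAt_matrix.mpr hfg) u i j
    _ = ∑ k, (fderiv 𝕜 (fun y => f y i k) x u * g x k j
          + f x i k * fderiv 𝕜 (fun y => g y k j) x u) := by
        rw [fderiv_fun_sum fun k _ => (hf i k).fun_mul (hg k j), _root_.sum_apply]
        refine Finset.sum_congr rfl fun k _ => ?_
        simp [fderiv_fun_mul' (hf i k) (hg k j), add_comm]
    _ = (fderiv 𝕜 f x u * g x + f x * fderiv 𝕜 g x u) i j := by
        simp only [Matrix.add_apply, mul_apply, Finset.sum_add_distrib,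
          fderiv_matrix_apply (differentiableAt_matrix.mpr hf),
          fderiv_matrix_apply (differentiableAt_matrix.mpr hg)]

theorem fderiv_matrix_lie {A B : E → Matrix m m R}
    (hA : DifferentiableAt 𝕜 A x) (hB : DifferentiableAt 𝕜 B x) (u : E) :
    fderiv 𝕜 (fun y => ⁅A y, B y⁆) x u = ⁅fderiv 𝕜 A x u, B x⁆ + ⁅A x, fderiv 𝕜 B x u⁆ := by
  have hAB := differentiableAt_matrix_mul hA hB
  have hBA := differentiableAt_matrix_mul hB hA
  calc fderiv 𝕜 (fun y => A y * B y - B y * A y) x u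
      = fderiv 𝕜 (fun y => A y * B y) x u - fderiv 𝕜 (fun y => B y * A y) x u :=
        congr($(fderiv_fun_sub hAB hBA) u)
    _ = ⁅fderiv 𝕜 A x u, B x⁆ + ⁅A x, fderiv 𝕜 B x u⁆ := by
        rw [fderiv_matrix_mul hA hB, fderiv_matrix_mul hB hA, Ring.lie_def, Ring.lie_def]
        abel

end MatrixCalculus

theorem fderiv_fderiv_apply_comm {𝕜 E F : Type*} [RCLike 𝕜] [NormedAddCommGroup E]
    [NormedSpace 𝕜 E] [NormedAddCommGroup F] [NormedSpace 𝕜 F] {f : E → F} {x : E}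
    (hf : ContDiffAt 𝕜 2 f x) (u v : E) :
    fderiv 𝕜 (fun y => fderiv 𝕜 f y v) x u = fderiv 𝕜 (fun y => fderiv 𝕜 f y u) x v := by
  have hdiff : DifferentiableAt 𝕜 (fderiv 𝕜 f) x :=
    (hf.fderiv_right (m := 1) (by norm_num)).differentiableAt one_ne_zero
  have hsymm : IsSymmSndFDerivAt 𝕜 f x := hf.isSymmSndFDerivAt (by simp)
  have fderiv_apply (w z : E) :
      fderiv 𝕜 (fun y => fderiv 𝕜 f y w) x z = fderiv 𝕜 (fderiv 𝕜 f) x z w := by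
    simp [fderiv_clm_apply hdiff (differentiableAt_const w)]
  rw [fderiv_apply, fderiv_apply, hsymm]

section Curvature

variable {𝕜 E R n : Type*} [NormedAddCommGroup E] [Fintype n]

/-- The curvature `∂_u B - ∂_v A - [A, B] = -[∂_u - A, ∂_v - B]` at `x` of the connection `∂ - C`,
with the overall sign of the zero-curvature equation; the matrix-valued functions `A` and `B` are
the components of `C` along the constant vector fields `u` and `v`. -/
noncomputable def matrixCurvature (𝕜 : Type*) [NontriviallyNormedField 𝕜] [NormedSpace 𝕜 E]
    [NormedRing R] [NormedAlgebra 𝕜 R] (u v : E) (A B : E → Matrix n n R) (x : E) :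
    Matrix n n R :=
  fderiv 𝕜 B x u - fderiv 𝕜 A x v - ⁅A x, B x⁆

variable {A B : E → Matrix n n R} {u v x : E}

theorem trace_matrixCurvature [NontriviallyNormedField 𝕜] [NormedSpace 𝕜 E] [NormedCommRing R]
    [NormedAlgebra 𝕜 R] (hA : DifferentiableAt 𝕜 A x) (hB : DifferentiableAt 𝕜 B x) :
    trace (matrixCurvature 𝕜 u v A B x) =
      fderiv 𝕜 (fun y => trace (B y)) x u - fderiv 𝕜 (fun y => trace (A y)) x v := by
  rw [matrixCurvature, trace_sub, trace_sub, LieAlgebra.matrix_trace_commutator_zero, sub_zero,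
    trace_fderiv hB, trace_fderiv hA]

variable [RCLike 𝕜] [NormedSpace 𝕜 E]

theorem commute_matrixCurvature [NormedRing R] [NormedAlgebra 𝕜 R] {h : E → Matrix n n R}
    (hA : DifferentiableAt 𝕜 A x) (hB : DifferentiableAt 𝕜 B x) (hh : ContDiffAt 𝕜 2 h x)
    (hu : ∀ᶠ y in 𝓝 x, fderiv 𝕜 h y u = ⁅A y, h y⁆)
    (hv : ∀ᶠ y in 𝓝 x, fderiv 𝕜 h y v = ⁅B y, h y⁆) :
    Commute (matrixCurvature 𝕜 u v A B x) (h x) := by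
  have hdiff : DifferentiableAt 𝕜 h x := hh.differentiableAt two_ne_zero
  have huv : fderiv 𝕜 (fun y => fderiv 𝕜 h y v) x u =
      ⁅fderiv 𝕜 B x u, h x⁆ + ⁅B x, ⁅A x, h x⁆⁆ := by
    rw [Filter.EventuallyEq.fderiv_eq hv, fderiv_matrix_lie hB hdiff, hu.self_of_nhds]
  have hvu : fderiv 𝕜 (fun y => fderiv 𝕜 h y u) x v =
      ⁅fderiv 𝕜 A x v, h x⁆ + ⁅A x, ⁅B x, h x⁆⁆ := by
    rw [Filter.EventuallyEq.fderiv_eq hu, fderiv_matrix_lie hA hdiff, hv.self_of_nhds]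
  have mixed_eq := huv.symm.trans ((fderiv_fderiv_apply_comm hh u v).trans hvu)
  rw [commute_iff_lie_eq]
  calc ⁅matrixCurvature 𝕜 u v A B x, h x⁆
      = (⁅fderiv 𝕜 B x u, h x⁆ + ⁅B x, ⁅A x, h x⁆⁆)
          - (⁅fderiv 𝕜 A x v, h x⁆ + ⁅A x, ⁅B x, h x⁆⁆) :=
        sub_sub_lie_lie (A x) (B x) (fderiv 𝕜 B x u) (fderiv 𝕜 A x v) (h x)
    _ = 0 := sub_eq_zero.mpr mixed_eq

theorem zero_curvature_of_primitive_equation_general {ι : Type*} [DecidableEq n] [NormedCommRing R]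
    [NormedAlgebra 𝕜 R] {h : ι → E → Matrix n n R}
    (hh : ∀ i, ContDiffAt 𝕜 2 (h i) x)
    (hA : DifferentiableAt 𝕜 A x) (hB : DifferentiableAt 𝕜 B x)
    (hAtr : ∀ᶠ y in 𝓝 x, trace (A y) = 0) (hBtr : ∀ᶠ y in 𝓝 x, trace (B y) = 0)
    (hu : ∀ i, ∀ᶠ y in 𝓝 x, fderiv 𝕜 (h i) y u = ⁅A y, h i y⁆)
    (hv : ∀ i, ∀ᶠ y in 𝓝 x, fderiv 𝕜 (h i) y v = ⁅B y, h i y⁆)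
    (hcomm : ∀ M : Matrix n n R, (∀ i, Commute M (h i x)) → ∃ c : R, M = c • 1) :
    matrixCurvature 𝕜 u v A B x = 0 := by
  have : IsAddTorsionFree R := .of_isTorsionFree 𝕜 R
  obtain ⟨c, hc⟩ := hcomm (matrixCurvature 𝕜 u v A B x) fun i =>
    commute_matrixCurvature hA hB (hh i) (hu i) (hv i)
  have htr : trace (matrixCurvature 𝕜 u v A B x) = 0 := by
    rw [trace_matrixCurvature hA hB, Filter.EventuallyEq.fderiv_eq hAtr,
      Filter.EventuallyEq.fderiv_eq hBtr]
    simp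
  rw [hc] at htr ⊢
  exact smul_one_eq_zero_of_trace_eq_zero htr

end Curvature

/-- if h^μ (C²) satisfy the Clifford relations pointwise, the C_μ
are C¹ and traceless, the primitive field equation ∂_μ h^ν − [C_μ, h^ν] = 0
holds, and at each point the only matrices commuting with all h^ν(x) are the
scalar matrices, then ∂_μ C_ν − ∂_ν C_μ − [C_μ, C_ν] = 0. -/
theorem zero_curvature_of_primitive_equation
    (p q N : ℕ) (hpq : 1 ≤ p + q) (hN : 1 ≤ N)
    (h C : Fin (p + q) → (Fin (p + q) → ℝ) → Matrix (Fin N) (Fin N) ℂ)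
    (hh : ∀ μ, ContDiff ℝ 2 (h μ))
    (hC : ∀ μ, ContDiff ℝ 1 (C μ))
    (hCtr : ∀ μ x, (C μ x).trace = 0)
    (hcl : ∀ x, CliffRel p q N (fun μ => h μ x))
    (hprim : ∀ μ ν x, pder μ (h ν) x - (C μ x * h ν x - h ν x * C μ x) = 0)
    (hcomm : ∀ x (A : Matrix (Fin N) (Fin N) ℂ),
      (∀ ν, A * h ν x = h ν x * A) → ∃ c : ℂ, A = c • (1 : Matrix (Fin N) (Fin N) ℂ)) :
    ∀ μ ν x,
      pder μ (C ν) x - pder ν (C μ) x - (C μ x * C ν x - C ν x * C μ x) = 0 := by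
  have hprim' (a k y) : fderiv ℝ (h k) y (Pi.single a 1) = ⁅C a y, h k y⁆ :=
    sub_eq_zero.mp (hprim a k y)
  have hC' (a x) : DifferentiableAt ℝ (C a) x := (hC a).differentiable one_ne_zero x
  exact fun μ ν x => zero_curvature_of_primitive_equation_general (fun k => (hh k).contDiffAt)
    (hC' μ x) (hC' ν x) (.of_forall (hCtr μ)) (.of_forall (hCtr ν))
    (fun k => .of_forall (hprim' μ k)) (fun k => .of_forall (hprim' ν k)) (hcomm x)
end

section
/- Let n = p + q ≥ 2 be even and N = 2^{n/2}. Let h^μ : ℝⁿ → Mat(N, ℂ) (μ = 1,…,n) be continuously differentiable and satisfy the Clifford relations at every point, and let C_μ : ℝⁿ → Mat(N, ℂ) satisfy tr C_μ(x) = 0 for all μ, x and the primitive field equation ∂_μ h_ρ − [C_μ, h_ρ] = 0 for all μ, ρ. Set λ_k = (−1)^k (n − 2k), let b_{kl} be the entries of the inverse of the (n+1)×(n+1) Vandermonde matrix A with A_{kl} = (λ_l)^k, and let r_l = Σ_{k=1}^{n} b_{kl}/(n − λ_k). Then for every μ and x: C_μ(x) = Σ_{l=0}^{n} r_l F^l(W_μ(x)),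 where W_μ(x) = Σ_{ρ=1}^n η_{ρρ} (∂_μ h^ρ)(x) h^ρ(x) and F is the generator contraction built from h^1(x),…,h^n(x). -/
open Matrix

attribute [local instance] Matrix.normedAddCommGroup Matrix.normedSpace

/-- λ_k = (−1)^k (n − 2k). -/
def lam (n k : ℕ) : ℤ := (-1) ^ k * ((n : ℤ) - 2 * (k : ℤ))

/-- The (n+1)×(n+1) Vandermonde matrix A_{kl} = (λ_l)^k over ℂ. -/
noncomputable def vand (n : ℕ) : Matrix (Fin (n + 1)) (Fin (n + 1)) ℂ :=
  Matrix.of fun k l : Fin (n + 1) => ((lam n (l : ℕ) : ℂ)) ^ (k : ℕ)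

/-- r_l = Σ_{k=1}^{n} b_{kl}/(n − λ_k), where b = A⁻¹. -/
noncomputable def rcoef (n : ℕ) (l : Fin (n + 1)) : ℂ :=
  ∑ k ∈ Finset.Ioi (0 : Fin (n + 1)),
    (vand n)⁻¹ k l / ((n : ℂ) - (lam n (k : ℕ) : ℂ))

/-- W_μ(x) = Σ_ρ η_{ρρ} (∂_μ h^ρ)(x) h^ρ(x). -/
noncomputable def Wfun (p q N : ℕ)
    (h : Fin (p + q) → (Fin (p + q) → ℝ) → Matrix (Fin N) (Fin N) ℂ)
    (μ : Fin (p + q)) (x : Fin (p + q) → ℝ) : Matrix (Fin N) (Fin N) ℂ :=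
  ∑ ρ : Fin (p + q), etaC p q ρ • (pder μ (h ρ) x * h ρ x)

/-- C_μ(x) = Σ_{l=0}^{n} r_l F^l(W_μ(x)). -/
noncomputable def Cformula (p q N : ℕ)
    (h : Fin (p + q) → (Fin (p + q) → ℝ) → Matrix (Fin N) (Fin N) ℂ)
    (μ : Fin (p + q)) (x : Fin (p + q) → ℝ) : Matrix (Fin N) (Fin N) ℂ :=
  ∑ l : Fin (p + q + 1),
    rcoef (p + q) l •
      (gencon p q N (fun a => h a x))^[(l : ℕ)] (Wfun p q N h μ x)

/-!
Multiplying the equation `∂_μ h^ρ = [C_μ, h^ρ]` by `η_{ρρ} h^ρ` on the right and summing over `ρ`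
gives `W_μ = n C_μ - F(C_μ)`, so the task is to invert `n - F` on traceless matrices. The Clifford
monomials `h^S` are eigenvectors of `F` with eigenvalues `λ_{|S|}`, and `λ_0, …, λ_n` are pairwise
distinct because `n` is even. The `2^n = N²` monomials form a basis of `Mat(N, ℂ)`, being
orthogonal for the trace form, and those with `S ≠ ∅` span the traceless matrices. On these `n - F`
has the eigenvalues `n - λ_k` with `k ≥ 1`, and the inverse Vandermonde matrix interpolates: the
polynomial `∑ r_l t^l` takes the value `(n - λ_k)⁻¹` at `λ_k`.
-/

section CliffordSystem

variable {ι A : Type*} [Ring A]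

/-- Generators of a Clifford algebra with diagonal metric `η`, realized in a ring: pairwise
anticommuting elements whose squares are the signs `η a`. Signs are units of `ℤ`, so that
`η a * η a = 1` needs no hypothesis and they act on every ring. -/
structure IsCliffordSystem (η : ι → ℤˣ) (e : ι → A) : Prop where
  mul_self : ∀ a, e a * e a = η a • (1 : A)
  mul_eq_neg_mul : ∀ ⦃a b⦄, a ≠ b → e a * e b = -(e b * e a)

/-- The Clifford monomial `∏_{a ∈ S} e a`. The order of the factors is an arbitrary one, which
affects the monomial only by a sign. -/
noncomputable def cliffordMonomial (e : ι → A) (S : Finset ι) : A :=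
  (S.toList.map e).prod

lemma cliffordMonomial_empty (e : ι → A) : cliffordMonomial e ∅ = 1 := by
  simp [cliffordMonomial]

/-- The sign `s` in the relation `e a * m = s • (m * e a)` for the Clifford monomial `m` of `S`. -/
def commutationSign [DecidableEq ι] (S : Finset ι) (a : ι) : ℤˣ :=
  (-1) ^ S.card * if a ∈ S then -1 else 1

section CommutationSign

variable [DecidableEq ι] [Fintype ι]

lemma prod_commutationSign (hι : Even (Fintype.card ι)) (S : Finset ι) :
    ∏ a, commutationSign S a = (-1) ^ S.card := by
  simp only [commutationSign, Finset.prod_mul_distrib, Finset.prod_const, Finset.card_univ,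
    Finset.prod_ite_mem, Finset.univ_inter]
  rw [pow_right_comm, hι.neg_one_pow, one_pow, one_mul]

-- The product of all commutation signs recovers the parity of `S`, and then `S` itself.
lemma commutationSign_injective (hι : Even (Fintype.card ι)) :
    Function.Injective (commutationSign : Finset ι → ι → ℤˣ) := by
  have mem_iff (S : Finset ι) (a : ι) :
      a ∈ S ↔ commutationSign S a = -∏ b, commutationSign S b := by
    rw [prod_commutationSign hι]
    by_cases ha : a ∈ S <;> simp [commutationSign, ha]
  intro S T hST
  ext a
  rw [mem_iff, mem_iff, hST]

lemma sum_commutationSign (S : Finset ι) :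
    ∑ a, (commutationSign S a : ℤ) = lam (Fintype.card ι) S.card := by
  have sign_eq (a : ι) :
      (commutationSign S a : ℤ) = (-1) ^ S.card * (1 - if a ∈ S then 2 else 0) := by
    by_cases ha : a ∈ S <;> simp [commutationSign, ha]
  simp only [sign_eq, ← Finset.mul_sum, Finset.sum_sub_distrib]
  simp [lam, mul_comm]

end CommutationSign

namespace IsCliffordSystem

variable {η : ι → ℤˣ} {e : ι → A}

lemma isUnit (he : IsCliffordSystem η e) (a : ι) : IsUnit (e a) := by
  have : IsUnit (e a * e a) := by
    rw [he.mul_self]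
    exact isUnit_one.smul (η a)
  exact isUnit_mul_self_iff.1 this

lemma mul_list_prod [DecidableEq ι] (he : IsCliffordSystem η e) (a : ι) (l : List ι) :
    e a * (l.map e).prod =
      ((-1) ^ l.length * (-1) ^ l.count a : ℤˣ) • ((l.map e).prod * e a) := by
  induction l with
  | nil => simp
  | cons b l ih =>
    rw [List.map_cons, List.prod_cons, List.length_cons]
    rcases eq_or_ne b a with rfl | hba
    · rw [List.count_cons_self, pow_succ, pow_succ, mul_mul_mul_comm, neg_one_mul, neg_neg,
        mul_one, mul_assoc (e b), ← mul_smul_comm, ← ih]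
    · rw [List.count_cons_of_ne hba, pow_succ, mul_neg_one, neg_mul, Units.neg_smul,
        ← mul_assoc, he.mul_eq_neg_mul hba.symm, neg_mul, mul_assoc, ih, mul_smul_comm, mul_assoc]

lemma mul_cliffordMonomial [DecidableEq ι] (he : IsCliffordSystem η e) (S : Finset ι) (a : ι) :
    e a * cliffordMonomial e S = commutationSign S a • (cliffordMonomial e S * e a) := by
  rw [cliffordMonomial, he.mul_list_prod, Finset.length_toList,
    S.nodup_toList.count, commutationSign]
  simp only [Finset.mem_toList]
  split_ifs <;> simp

lemma exists_list_prod_mul_self (he : IsCliffordSystem η e) (l : List ι) :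
    ∃ s : ℤˣ, (l.map e).prod * (l.map e).prod = s • (1 : A) := by
  classical
  induction l with
  | nil => exact ⟨1, by simp⟩
  | cons b l ih =>
    obtain ⟨s, hs⟩ := ih
    set m := (l.map e).prod
    obtain ⟨t, ht⟩ : ∃ t : ℤˣ, e b * m = t • (m * e b) := ⟨_, he.mul_list_prod b l⟩
    refine ⟨t * (η b * s), ?_⟩
    calc ((b :: l).map e).prod * ((b :: l).map e).prod
        = (e b * m) * (e b * m) := by rw [List.map_cons, List.prod_cons]
      _ = t • (m * (e b * e b) * m) := by
        nth_rw 1 [ht]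
        simp only [smul_mul_assoc, mul_assoc]
      _ = (t * (η b * s)) • (1 : A) := by
        rw [he.mul_self, mul_smul_one, smul_mul_assoc, hs, smul_smul, smul_smul, mul_assoc]

lemma exists_cliffordMonomial_mul_self (he : IsCliffordSystem η e) (S : Finset ι) :
    ∃ s : ℤˣ, cliffordMonomial e S * cliffordMonomial e S = s • (1 : A) :=
  he.exists_list_prod_mul_self S.toList

end IsCliffordSystem

section Contraction

variable [Fintype ι] (K : Type*) [CommRing K] [Algebra K A]

/-- The generator contraction `U ↦ ∑ a, η a • (e a * U * e a)`, as a linear endomorphism. -/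
def cliffordContraction (η : ι → ℤˣ) (e : ι → A) : Module.End K A :=
  ∑ a, η a • (LinearMap.mulLeft K (e a) ∘ₗ LinearMap.mulRight K (e a))

variable {K}

lemma cliffordContraction_apply (η : ι → ℤˣ) (e : ι → A) (U : A) :
    cliffordContraction K η e U = ∑ a, η a • (e a * U * e a) := by
  simp [cliffordContraction, mul_assoc]

namespace IsCliffordSystem

variable {η : ι → ℤˣ} {e : ι → A}

lemma cliffordContraction_eq_smul (he : IsCliffordSystem η e) {s : ι → ℤˣ} {U : A}
    (hU : ∀ a, e a * U = s a • (U * e a)) :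
    cliffordContraction K η e U = (∑ a, (s a : ℤ)) • U := by
  rw [cliffordContraction_apply, Finset.sum_smul]
  refine Finset.sum_congr rfl fun a _ => ?_
  rw [hU, smul_mul_assoc, mul_assoc, he.mul_self, mul_smul_one, smul_comm, smul_smul (η a),
    Int.units_mul_self, one_smul, Units.smul_def]

lemma cliffordContraction_cliffordMonomial (he : IsCliffordSystem η e) (S : Finset ι) :
    cliffordContraction K η e (cliffordMonomial e S) =
      lam (Fintype.card ι) S.card • cliffordMonomial e S := by
  classical
  rw [he.cliffordContraction_eq_smul (he.mul_cliffordMonomial S), sum_commutationSign]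

lemma sum_smul_commutator_mul (he : IsCliffordSystem η e) (C : A) :
    ∑ a, η a • ((C * e a - e a * C) * e a) =
      Fintype.card ι • C - cliffordContraction K η e C := by
  have term_eq (a : ι) : η a • ((C * e a - e a * C) * e a) = C - η a • (e a * C * e a) := by
    rw [sub_mul, smul_sub, mul_assoc C, he.mul_self, mul_smul_one, smul_smul, Int.units_mul_self,
      one_smul]
  simp only [term_eq, cliffordContraction_apply, Finset.sum_sub_distrib, Finset.sum_const,
    Finset.card_univ]

end IsCliffordSystem

end Contraction

end CliffordSystem

lemma natCast_ne_zero_of_mul_self_eq_two_pow {K : Type*} [Semiring K] [NoZeroDivisors K]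
    [NeZero (2 : K)] {N k : ℕ} (hN : N * N = 2 ^ k) : (N : K) ≠ 0 := by
  have : Nontrivial K := ⟨2, 0, two_ne_zero⟩
  refine left_ne_zero_of_mul (b := (N : K)) ?_
  rw [← Nat.cast_mul, hN, Nat.cast_pow, Nat.cast_ofNat]
  exact pow_ne_zero k two_ne_zero

lemma trace_eq_zero_of_isUnit_of_mul_eq_neg {m R : Type*} [Fintype m] [DecidableEq m]
    [CommRing R] [NoZeroDivisors R] [NeZero (2 : R)] {x U : Matrix m m R} (hx : IsUnit x)
    (hU : x * U = -(U * x)) : U.trace = 0 := by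
  obtain ⟨u, rfl⟩ := hx
  have trace_eq_neg : U.trace = -U.trace := by
    rw [← trace_neg, ← trace_units_conj u U, hU, neg_mul, Units.mul_inv_cancel_right]
  have two_mul_trace : 2 * U.trace = 0 := by linear_combination trace_eq_neg
  exact (mul_eq_zero.1 two_mul_trace).resolve_left two_ne_zero

namespace IsCliffordSystem

section Trace

variable {ι m R : Type*} [Fintype ι] [Fintype m] [DecidableEq m] [CommRing R] [NoZeroDivisors R]
  [NeZero (2 : R)] {η : ι → ℤˣ} {e : ι → Matrix m m R}

lemma trace_cliffordMonomial_mul_cliffordMonomial_eq_zero (he : IsCliffordSystem η e)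
    (hι : Even (Fintype.card ι)) {S T : Finset ι} (hST : S ≠ T) :
    (cliffordMonomial e S * cliffordMonomial e T).trace = 0 := by
  classical
  obtain ⟨a, ha⟩ := Function.ne_iff.1 ((commutationSign_injective hι).ne hST)
  have hsign : commutationSign S a * commutationSign T a = -1 := by
    rw [Int.units_ne_iff_eq_neg.1 ha, neg_mul, Int.units_mul_self]
  refine trace_eq_zero_of_isUnit_of_mul_eq_neg (he.isUnit a) ?_
  rw [← mul_assoc, he.mul_cliffordMonomial, smul_mul_assoc, mul_assoc, he.mul_cliffordMonomial,
    mul_smul_comm, smul_smul, hsign, Units.neg_smul, one_smul, mul_assoc]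

lemma trace_cliffordMonomial_eq_zero (he : IsCliffordSystem η e) (hι : Even (Fintype.card ι))
    {S : Finset ι} (hS : S ≠ ∅) :
    (cliffordMonomial e S).trace = 0 := by
  simpa [cliffordMonomial_empty] using he.trace_cliffordMonomial_mul_cliffordMonomial_eq_zero hι hS

end Trace

section Span

variable {ι m K : Type*} [Fintype ι] [Fintype m] [DecidableEq m] [Field K] [NeZero (2 : K)]
  {η : ι → ℤˣ} {e : ι → Matrix m m K}

-- The monomials are orthogonal for the trace form `(U, V) ↦ tr (U * V)`, and none is isotropic.
lemma linearIndependent_cliffordMonomial (he : IsCliffordSystem η e)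
    (hι : Even (Fintype.card ι)) (hm : (Fintype.card m : K) ≠ 0) :
    LinearIndependent K (cliffordMonomial e) := by
  let traceForm : LinearMap.BilinForm K (Matrix m m K) :=
    (LinearMap.mul K (Matrix m m K)).compr₂ (traceLinearMap m K K)
  refine LinearMap.BilinForm.linearIndependent_of_iIsOrtho (B := traceForm)
    (LinearMap.BilinForm.iIsOrtho_def.2 fun S T hST =>
      he.trace_cliffordMonomial_mul_cliffordMonomial_eq_zero hι hST)
    fun S => ?_
  obtain ⟨s, hs⟩ := he.exists_cliffordMonomial_mul_self S
  have : traceForm (cliffordMonomial e S) (cliffordMonomial e S) = s • (Fintype.card m : K) := by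
    simp [traceForm, hs]
  rwa [this, smul_ne_zero_iff_ne]

lemma span_cliffordMonomial_eq_top (he : IsCliffordSystem η e) (hι : Even (Fintype.card ι))
    (hm : Fintype.card m * Fintype.card m = 2 ^ Fintype.card ι) :
    Submodule.span K (Set.range (cliffordMonomial e)) = ⊤ := by
  have card_ne_zero : (Fintype.card m : K) ≠ 0 := natCast_ne_zero_of_mul_self_eq_two_pow hm
  refine (he.linearIndependent_cliffordMonomial hι card_ne_zero).span_eq_top_of_card_eq_finrank' ?_
  rw [Fintype.card_finset, Module.finrank_matrix, Module.finrank_self, mul_one, hm]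

lemma mem_span_cliffordMonomial_of_trace_eq_zero (he : IsCliffordSystem η e)
    (hι : Even (Fintype.card ι)) (hm : Fintype.card m * Fintype.card m = 2 ^ Fintype.card ι)
    {U : Matrix m m K} (hU : U.trace = 0) :
    U ∈ Submodule.span K (cliffordMonomial e '' {∅}ᶜ) := by
  have span_le_ker_trace :
      Submodule.span K (cliffordMonomial e '' {∅}ᶜ) ≤ LinearMap.ker (traceLinearMap m K K) := by
    rw [Submodule.span_le]
    rintro _ ⟨S, hS, rfl⟩
    exact he.trace_cliffordMonomial_eq_zero hι hS
  have hspan : U ∈ Submodule.span K (insert 1 (cliffordMonomial e '' {∅}ᶜ)) := by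
    have range_eq :
        Set.range (cliffordMonomial e) = insert 1 (cliffordMonomial e '' {∅}ᶜ) := by
      rw [← cliffordMonomial_empty e, ← Set.image_insert_eq, Set.insert_eq, Set.union_compl_self,
        Set.image_univ]
    rw [← range_eq, he.span_cliffordMonomial_eq_top hι hm]
    exact Submodule.mem_top
  obtain ⟨c, V, hV, rfl⟩ := Submodule.mem_span_insert.1 hspan
  have trace_V : V.trace = 0 := span_le_ker_trace hV
  have hc : c = 0 := by
    simpa [trace_V, natCast_ne_zero_of_mul_self_eq_two_pow (K := K) hm] using hU
  simpa [hc] using hV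

end Span

end IsCliffordSystem

section Interpolation

lemma lam_zero (n : ℕ) : lam n 0 = n := by
  simp [lam]

lemma lam_injective {n : ℕ} (hn : Even n) : Function.Injective (lam n) := by
  intro j k hjk
  obtain ⟨m, rfl⟩ := hn
  unfold lam at hjk
  rcases Nat.even_or_odd' j with ⟨a, rfl | rfl⟩ <;>
    rcases Nat.even_or_odd' k with ⟨b, rfl | rfl⟩ <;>
    simp only [pow_add, pow_mul, neg_one_sq, one_pow, pow_one, one_mul, neg_one_mul] at hjk <;>
    omega

lemma isUnit_det_vand {n : ℕ} (hn : Even n) : IsUnit (vand n).det := by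
  have vand_eq : vand n = (vandermonde fun k : Fin (n + 1) => (lam n k : ℂ))ᵀ := rfl
  rw [vand_eq, det_transpose, isUnit_iff_ne_zero, det_vandermonde_ne_zero_iff]
  exact Int.cast_injective.comp ((lam_injective hn).comp Fin.val_injective)

-- The index `k = 0`, left out in the definition of `rcoef`, contributes `(n - λ₀)⁻¹ = 0⁻¹ = 0`.
lemma rcoef_eq_vecMul (n : ℕ) :
    rcoef n = (fun k : Fin (n + 1) => ((n : ℂ) - lam n k)⁻¹) ᵥ* (vand n)⁻¹ := by
  ext l
  rw [rcoef, vecMul, dotProduct]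
  refine (Finset.sum_subset (Finset.subset_univ _) fun k _ hk => ?_).trans
    (Finset.sum_congr rfl fun k _ => div_eq_inv_mul _ _)
  have : k = 0 := by simpa using hk
  simp [this, lam_zero]

lemma sum_rcoef_mul_lam_pow {n : ℕ} (hn : Even n) (k : Fin (n + 1)) :
    ∑ l : Fin (n + 1), rcoef n l * (lam n k : ℂ) ^ (l : ℕ) = ((n : ℂ) - lam n k)⁻¹ := by
  have : rcoef n ᵥ* vand n = fun k : Fin (n + 1) => ((n : ℂ) - lam n k)⁻¹ := by
    rw [rcoef_eq_vecMul, vecMul_vecMul, nonsing_inv_mul _ (isUnit_det_vand hn), vecMul_one]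
  exact congrFun this k

lemma sum_rcoef_smul_pow_apply {V : Type*} [AddCommGroup V] [Module ℂ V] {n : ℕ} (hn : Even n)
    {F : Module.End ℂ V} {v : V} {k : ℕ} (hk : k ≠ 0) (hkn : k ≤ n) (hv : F v = lam n k • v) :
    ∑ l : Fin (n + 1), rcoef n l • (F ^ (l : ℕ)) (n • v - F v) = v := by
  have hlam : (n : ℂ) - lam n k ≠ 0 := by
    rw [sub_ne_zero, ← Int.cast_natCast, ← lam_zero, Int.cast_injective.ne_iff]
    exact (lam_injective hn).ne hk.symm
  have hv : F v = (lam n k : ℂ) • v := by rw [hv, Int.cast_smul_eq_zsmul]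
  have hpow (l : ℕ) : (F ^ l) v = (lam n k : ℂ) ^ l • v := by
    induction l with
    | zero => simp
    | succ l ih => rw [pow_succ, Module.End.mul_apply, hv, map_smul, ih, smul_smul, pow_succ']
  calc ∑ l : Fin (n + 1), rcoef n l • (F ^ (l : ℕ)) (n • v - F v)
      = ((n : ℂ) - lam n k) • ∑ l : Fin (n + 1), rcoef n l • (F ^ (l : ℕ)) v := by
        rw [hv, ← Nat.cast_smul_eq_nsmul ℂ, ← sub_smul, Finset.smul_sum]
        simp only [map_smul, smul_comm (rcoef n _)]
    _ = (((n : ℂ) - lam n k) * ((n : ℂ) - lam n k)⁻¹) • v := by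
        rw [mul_smul, ← sum_rcoef_mul_lam_pow hn ⟨k, Nat.lt_succ_of_le hkn⟩]
        simp only [hpow, smul_smul, Finset.sum_smul]
    _ = v := by rw [mul_inv_cancel₀ hlam, one_smul]

end Interpolation

lemma IsCliffordSystem.sum_rcoef_smul_pow_cliffordContraction {ι m : Type*} [Fintype ι]
    [Fintype m] [DecidableEq m] {η : ι → ℤˣ} {e : ι → Matrix m m ℂ} (he : IsCliffordSystem η e)
    {n : ℕ} (hι : Fintype.card ι = n) (hn : Even n)
    (hm : Fintype.card m * Fintype.card m = 2 ^ n) {U : Matrix m m ℂ} (hU : U.trace = 0) :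
    ∑ l : Fin (n + 1), rcoef n l •
      (cliffordContraction ℂ η e ^ (l : ℕ)) (n • U - cliffordContraction ℂ η e U) = U := by
  subst hι
  set n := Fintype.card ι
  set F := cliffordContraction ℂ η e
  let P : Module.End ℂ (Matrix m m ℂ) :=
    (∑ l : Fin (n + 1), rcoef n l • F ^ (l : ℕ)) * (n • 1 - F)
  have P_apply (V : Matrix m m ℂ) :
      P V = ∑ l : Fin (n + 1), rcoef n l • (F ^ (l : ℕ)) (n • V - F V) := by
    simp [P]
  have P_eqOn : Set.EqOn P (LinearMap.id : Module.End ℂ (Matrix m m ℂ))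
      (cliffordMonomial e '' {∅}ᶜ) := by
    rintro _ ⟨S, hS, rfl⟩
    rw [P_apply]
    exact sum_rcoef_smul_pow_apply hn (Finset.card_ne_zero.2 (Finset.nonempty_iff_ne_empty.2 hS))
      S.card_le_univ (he.cliffordContraction_cliffordMonomial S)
  rw [← P_apply]
  exact LinearMap.eqOn_span P_eqOn (he.mem_span_cliffordMonomial_of_trace_eq_zero hn hm hU)

section Signature

/-- The metric entries `η^{μμ}` of signature `(p, q)` as integer units, the form of the signs of an
`IsCliffordSystem`. -/
def etaSign (p q : ℕ) (μ : Fin (p + q)) : ℤˣ := if (μ : ℕ) < p then 1 else -1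

variable {p q : ℕ}

lemma etaC_smul {V : Type*} [AddCommGroup V] [Module ℂ V] (μ : Fin (p + q)) (v : V) :
    etaC p q μ • v = etaSign p q μ • v := by
  unfold etaC etaSign
  split_ifs <;> simp

lemma etaC_ne_zero (μ : Fin (p + q)) : etaC p q μ ≠ 0 := by
  unfold etaC
  split_ifs <;> simp

lemma CliffRel.isCliffordSystem {N : ℕ} {g : Fin (p + q) → Matrix (Fin N) (Fin N) ℂ}
    (hg : CliffRel p q N g) : IsCliffordSystem (etaSign p q) g where
  mul_self a := by
    have two_smul_mul_self : (2 : ℂ) • (g a * g a) = (2 : ℂ) • (etaSign p q a • 1) := by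
      rw [two_smul, hg a a, if_pos rfl, mul_smul, etaC_smul]
    exact smul_right_injective _ two_ne_zero two_smul_mul_self
  mul_eq_neg_mul a b hab := by
    refine eq_neg_of_add_eq_zero_left ?_
    rw [hg a b, if_neg hab, mul_zero, zero_smul]

lemma gencon_eq_cliffordContraction {N : ℕ} (g : Fin (p + q) → Matrix (Fin N) (Fin N) ℂ) :
    gencon p q N g = cliffordContraction ℂ (etaSign p q) g := by
  ext1 U
  simp only [gencon, etaC_smul, cliffordContraction_apply]

lemma pder_eq_commutator {n N : ℕ} {μ : Fin n} {f : (Fin n → ℝ) → Matrix (Fin N) (Fin N) ℂ}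
    {x : Fin n → ℝ} {C : Matrix (Fin N) (Fin N) ℂ} {c : ℂ} (hc : c ≠ 0)
    (h : pder μ (fun y => c • f y) x - (C * (c • f x) - (c • f x) * C) = 0) :
    pder μ f x = C * f x - f x * C := by
  have pder_smul : pder μ (fun y => c • f y) x = c • pder μ f x :=
    DFunLike.congr_fun (congrFun (fderiv_const_smul_field (𝕜 := ℝ) (f := f) c) x) (Pi.single μ 1)
  rw [pder_smul, mul_smul_comm, smul_mul_assoc, ← smul_sub, ← smul_sub] at h
  exact sub_eq_zero.1 ((smul_eq_zero.1 h).resolve_left hc)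

end Signature

/-- for even n = p + q ≥ 2 and N = 2^{n/2}, any traceless
solution C_μ of the primitive field equation ∂_μ h_ρ − [C_μ, h_ρ] = 0
(with h_ρ = η_{ρρ} h^ρ) is given by the explicit formula
C_μ = Σ_l r_l F^l(Σ_ρ η_{ρρ} (∂_μ h^ρ) h^ρ). -/
theorem uniqueness_of_primitive_equation_solution_even
    (p q : ℕ) (hn : 2 ≤ p + q) (heven : Even (p + q))
    (h C : Fin (p + q) → (Fin (p + q) → ℝ) →
      Matrix (Fin (2 ^ ((p + q) / 2))) (Fin (2 ^ ((p + q) / 2))) ℂ)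
    (hdiff : ∀ μ, ContDiff ℝ 1 (h μ))
    (hcl : ∀ x, CliffRel p q (2 ^ ((p + q) / 2)) (fun μ => h μ x))
    (hCtr : ∀ μ x, (C μ x).trace = 0)
    (hprim : ∀ μ ρ x,
      pder μ (fun y => etaC p q ρ • h ρ y) x -
        (C μ x * (etaC p q ρ • h ρ x) - (etaC p q ρ • h ρ x) * C μ x) = 0) :
    ∀ μ x, C μ x = Cformula p q (2 ^ ((p + q) / 2)) h μ x := by
  intro μ x
  have he : IsCliffordSystem (etaSign p q) fun a => h a x := (hcl x).isCliffordSystem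
  have hpder (ρ) : pder μ (h ρ) x = C μ x * h ρ x - h ρ x * C μ x :=
    pder_eq_commutator (etaC_ne_zero ρ) (hprim μ ρ x)
  have hW : Wfun p q _ h μ x =
      (p + q) • C μ x - cliffordContraction ℂ (etaSign p q) (fun a => h a x) (C μ x) := by
    simpa only [Wfun, etaC_smul, hpder, Fintype.card_fin] using he.sum_smul_commutator_mul (C μ x)
  have hN : 2 ^ ((p + q) / 2) * 2 ^ ((p + q) / 2) = 2 ^ (p + q) := by
    rw [← mul_pow, ← pow_two, ← pow_mul, Nat.two_mul_div_two_of_even heven]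
  rw [Cformula, hW, gencon_eq_cliffordContraction]
  simp only [← Module.End.pow_apply]
  exact (he.sum_rcoef_smul_pow_cliffordContraction (Fintype.card_fin _) heven
    (by rw [Fintype.card_fin, hN]) (hCtr μ x)).symm
end
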